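/- At every point (r,v) of phase space with A(r,v) ≠ 0, the seven functions E, L_1, L_2, L_3, Θ_1, Θ_2, Θ_3 are closed under the Poisson bracket, with the only nonvanishing brackets among them being {L_i, L_j} = Σ_k ε_{ijk} L_k and {L_i, Θ_j} = Σ_k ε_{ijk} Θ_k; in particular {E, L_i} = 0, {E, Θ_i} = 0, and {Θ_i, Θ_j} = 0 for all i, j ∈ {1,2,3}. (This is the bracket structure of the Lie algebra ℝ ⊕ (so(3) ⋉ ℝ³).) -/

import Mathlib

/-!
The bracket `{F, G}` is the derivative of `G` along the vector field `(-∇ᵥF, ∇ᵣF)`, and the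
derivative of `x ↦ x / ‖x‖` is `‖x‖⁻¹ P`, where `P` is the orthogonal projection onto `xᗮ`. Hence
`{F, ⟪Θ, c⟫} = ‖A‖⁻¹ {F, ⟪A, P c⟫}` with `P` the projection onto `Aᗮ`, and all brackets with `Θ`
reduce to the classical ones with `A`: `{E, ⟪A, c⟫} = 0`, `{L, ⟪A, c⟫} = ⟪A, J c⟫` for the
infinitesimal rotation `J` that `L` generates, and `{⟪A, c⟫, ⟪A, d⟫} = -2E (r ∧ v)(c, d)`. In the
second one `P` can be dropped because `J` is skew-adjoint, so that `⟪A, J A⟫ = 0`. In the third one,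
`A` lies in the span of `r` and `v`, so the bivector `r ∧ v` vanishes on `Aᗮ × Aᗮ` and the brackets
of the components of `Θ` are zero. All of this makes sense in a real Hilbert space of any dimension.
-/

noncomputable section

/-- Physical 3-space. -/
abbrev E3 : Type := EuclideanSpace ℝ (Fin 3)

/-- Build a vector in `E3` from its components. -/
def toE3 (f : Fin 3 → ℝ) : E3 := (EuclideanSpace.equiv (Fin 3) ℝ).symm f

/-- Cross product in `ℝ³`. -/
def cross (a b : E3) : E3 :=
  toE3 ![a 1 * b 2 - a 2 * b 1, a 2 * b 0 - a 0 * b 2, a 0 * b 1 - a 1 * b 0]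

/-- Dot product in `ℝ³`. -/
def dot (a b : E3) : ℝ := ∑ i, a i * b i

/-- Gradient in the `r` variable of a function on phase space. -/
def gradR (F : E3 × E3 → ℝ) (p : E3 × E3) : E3 := gradient (fun x => F (x, p.2)) p.1

/-- Gradient in the `v` variable of a function on phase space. -/
def gradV (F : E3 × E3 → ℝ) (p : E3 × E3) : E3 := gradient (fun y => F (p.1, y)) p.2

/-- Poisson bracket of two functions on phase space. -/
def pb (F G : E3 × E3 → ℝ) (p : E3 × E3) : ℝ :=
  dot (gradR F p) (gradV G p) - dot (gradR G p) (gradV F p)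

/-- Energy `E(r,v) = (1/2)‖v‖² − κ/‖r‖`. -/
def energy (κ : ℝ) (p : E3 × E3) : ℝ := (1/2) * ‖p.2‖^2 - κ / ‖p.1‖

/-- Angular momentum `L(r,v) = r × v`. -/
def angMom (p : E3 × E3) : E3 := cross p.1 p.2

/-- Laplace–Runge–Lenz vector `A(r,v) = v × L − κ r/‖r‖`. -/
def lrl (κ : ℝ) (p : E3 × E3) : E3 := cross p.2 (angMom p) - (κ / ‖p.1‖) • p.1

/-- LRL direction vector `Θ = A/‖A‖`. -/
def lrlDir (κ : ℝ) (p : E3 × E3) : E3 := ‖lrl κ p‖⁻¹ • lrl κ p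

/-- Levi-Civita symbol `ε_{ijk}` on indices in `{0,1,2}`. -/
def eps (i j k : Fin 3) : ℝ :=
  (((j : ℕ) : ℝ) - ((i : ℕ) : ℝ)) * (((k : ℕ) : ℝ) - ((i : ℕ) : ℝ))
    * (((k : ℕ) : ℝ) - ((j : ℕ) : ℝ)) / 2

section PartialDerivatives

variable {𝕜 E F G : Type*} [NontriviallyNormedField 𝕜] [NormedAddCommGroup E] [NormedSpace 𝕜 E]
  [NormedAddCommGroup F] [NormedSpace 𝕜 F] [NormedAddCommGroup G] [NormedSpace 𝕜 G]

theorem fderiv_comp_prodMk_left {f : E × F → G} {p : E × F} (hf : DifferentiableAt 𝕜 f p) (x : E) :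
    fderiv 𝕜 (fun x => f (x, p.2)) p.1 x = fderiv 𝕜 f p (x, 0) := by
  have h := hf.hasFDerivAt.comp (f := fun x => (x, p.2)) p.1 (hasFDerivAt_prodMk_left p.1 p.2)
  rw [h.fderiv (f := fun x => f (x, p.2)), ContinuousLinearMap.comp_apply,
    ContinuousLinearMap.inl_apply]

theorem fderiv_comp_prodMk_right {f : E × F → G} {p : E × F} (hf : DifferentiableAt 𝕜 f p)
    (y : F) : fderiv 𝕜 (fun y => f (p.1, y)) p.2 y = fderiv 𝕜 f p (0, y) := by
  have h := hf.hasFDerivAt.comp (f := fun y => (p.1, y)) p.2 (hasFDerivAt_prodMk_right p.1 p.2)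
  rw [h.fderiv (f := fun y => f (p.1, y)), ContinuousLinearMap.comp_apply,
    ContinuousLinearMap.inr_apply]

end PartialDerivatives

section HilbertSpace

open scoped RealInnerProductSpace Gradient

variable {V : Type*} [NormedAddCommGroup V] [InnerProductSpace ℝ V]

theorem starProjection_orthogonal_singleton (x y : V) :
    (ℝ ∙ x)ᗮ.starProjection y = y - (⟪x, y⟫ / ‖x‖ ^ 2) • x := by
  simp [Submodule.starProjection_singleton]

theorem hasFDerivAt_norm_inv {x : V} (hx : x ≠ 0) :
    HasFDerivAt (fun y : V => ‖y‖⁻¹) (-(‖x‖⁻¹ ^ 3) • innerSL ℝ x) x := by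
  have hx' : ‖x‖ ≠ 0 := norm_ne_zero_iff.2 hx
  have h := (hasDerivAt_inv hx').comp_hasFDerivAt_of_eq x
    ((hasStrictFDerivAt_norm_sq x).hasFDerivAt.sqrt (pow_ne_zero 2 hx'))
    (by simp only [Real.sqrt_sq (norm_nonneg _)])
  simp only [Function.comp_def, Real.sqrt_sq (norm_nonneg _)] at h
  refine h.congr_fderiv (ContinuousLinearMap.ext fun y => ?_)
  simp only [smul_apply, coe_innerSL_apply, nsmul_eq_mul, Nat.cast_ofNat, smul_eq_mul]
  field_simp

theorem hasFDerivAt_normalize {x : V} (hx : x ≠ 0) :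
    HasFDerivAt NormedSpace.normalize (‖x‖⁻¹ • (ℝ ∙ x)ᗮ.starProjection) x := by
  refine ((hasFDerivAt_norm_inv hx).smul (hasFDerivAt_id x)).congr_fderiv
    (ContinuousLinearMap.ext fun y => ?_)
  simp only [add_apply, smul_apply, ContinuousLinearMap.smulRight_apply,
    ContinuousLinearMap.id_apply, coe_innerSL_apply, smul_eq_mul, id_eq,
    starProjection_orthogonal_singleton]
  module

/-- The energy of the Kepler problem in `V`. -/
def keplerEnergy (κ : ℝ) (p : V × V) : ℝ := (1 / 2) * ‖p.2‖ ^ 2 - κ / ‖p.1‖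

/-- The angular momentum as an alternating form: the component of the bivector `r ∧ v` along
`a ∧ b`. -/
def angularMomentum (a b : V) (p : V × V) : ℝ := ⟪p.1, a⟫ * ⟪p.2, b⟫ - ⟪p.1, b⟫ * ⟪p.2, a⟫

/-- The Laplace-Runge-Lenz vector. In terms of the bivector `r ∧ v`, the product `v × L` is
`‖v‖² r - ⟪r, v⟫ v`, which makes sense in any dimension. -/
def lrlVector (κ : ℝ) (p : V × V) : V :=
  ‖p.2‖ ^ 2 • p.1 - ⟪p.1, p.2⟫ • p.2 - κ • NormedSpace.normalize p.1

/-- The direction `A / ‖A‖` of the Laplace-Runge-Lenz vector. -/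
def lrlDirection (κ : ℝ) (p : V × V) : V := NormedSpace.normalize (lrlVector κ p)

/-- The generator of the rotations in the oriented plane spanned by `a` and `b`. -/
def infinitesimalRotation (a b x : V) : V := ⟪x, a⟫ • b - ⟪x, b⟫ • a

theorem inner_infinitesimalRotation_left (a b x y : V) :
    ⟪infinitesimalRotation a b x, y⟫ = -⟪x, infinitesimalRotation a b y⟫ := by
  simp only [infinitesimalRotation, inner_sub_left, inner_sub_right, real_inner_smul_left,
    real_inner_smul_right, real_inner_comm y a, real_inner_comm y b]
  ring

theorem hasFDerivAt_keplerEnergy (κ : ℝ) {p : V × V} (hp : p.1 ≠ 0) :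
    HasFDerivAt (keplerEnergy κ)
      ((innerSL ℝ ((κ * ‖p.1‖⁻¹ ^ 3) • p.1)).coprod (innerSL ℝ p.2)) p := by
  have hv := (hasFDerivAt_snd (𝕜 := ℝ) (p := p)).norm_sq
  have hr := (hasFDerivAt_norm_inv hp).comp p hasFDerivAt_fst
  refine ((hv.const_mul (1 / 2)).sub (hr.const_mul κ)).congr_fderiv ?_
  ext x <;> simp [mul_assoc]

theorem hasFDerivAt_angularMomentum (a b : V) (p : V × V) :
    HasFDerivAt (angularMomentum a b)
      ((innerSL ℝ (⟪p.2, b⟫ • a - ⟪p.2, a⟫ • b)).coprod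
        (innerSL ℝ (⟪p.1, a⟫ • b - ⟪p.1, b⟫ • a))) p := by
  have hr (c : V) := (hasFDerivAt_fst (𝕜 := ℝ) (p := p)).inner ℝ (hasFDerivAt_const c p)
  have hv (c : V) := (hasFDerivAt_snd (𝕜 := ℝ) (p := p)).inner ℝ (hasFDerivAt_const c p)
  refine (((hr a).mul (hv b)).sub ((hr b).mul (hv a))).congr_fderiv ?_
  ext x <;> simp [real_inner_comm x]

theorem fderiv_angularMomentum_apply (a b : V) (p q : V × V) :
    fderiv ℝ (angularMomentum a b) p q =
      angularMomentum a b (q.1, p.2) + angularMomentum a b (p.1, q.2) := by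
  simp [(hasFDerivAt_angularMomentum a b p).fderiv, angularMomentum, real_inner_comm q.1,
    real_inner_comm q.2, mul_comm]

theorem hasFDerivAt_lrlVector (κ : ℝ) {p : V × V} (hp : p.1 ≠ 0) :
    HasFDerivAt (lrlVector κ)
      ((‖p.2‖ ^ 2 • .id ℝ V - (innerSL ℝ p.2).smulRight p.2 -
          (κ * ‖p.1‖⁻¹) • (ℝ ∙ p.1)ᗮ.starProjection).coprod
        ((2 : ℝ) • (innerSL ℝ p.2).smulRight p.1 - (innerSL ℝ p.1).smulRight p.2 -
          ⟪p.1, p.2⟫ • .id ℝ V)) p := by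
  have hr := hasFDerivAt_fst (𝕜 := ℝ) (p := p)
  have hv := hasFDerivAt_snd (𝕜 := ℝ) (p := p)
  refine (((hv.norm_sq.smul hr).sub ((hr.inner ℝ hv).smul hv)).sub
    (((hasFDerivAt_normalize hp).comp p hr).const_smul κ)).congr_fderiv ?_
  ext x
  · simp [real_inner_comm x, mul_smul]
  · simp [mul_smul, sub_sub, add_comm]

theorem fderiv_lrlVector_apply (κ : ℝ) {p : V × V} (hp : p.1 ≠ 0) (q : V × V) :
    fderiv ℝ (lrlVector κ) p q =
      ‖p.2‖ ^ 2 • q.1 - ⟪p.2, q.1⟫ • p.2 - (κ * ‖p.1‖⁻¹) • (ℝ ∙ p.1)ᗮ.starProjection q.1 +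
        (((2 : ℝ) * ⟪p.2, q.2⟫) • p.1 - ⟪p.1, q.2⟫ • p.2 - ⟪p.1, p.2⟫ • q.2) := by
  simp [(hasFDerivAt_lrlVector κ hp).fderiv, mul_smul]

theorem hasFDerivAt_inner_lrlVector (κ : ℝ) {p : V × V} (hp : p.1 ≠ 0) (c : V) :
    HasFDerivAt (fun q => ⟪lrlVector κ q, c⟫)
      ((innerSL ℝ (‖p.2‖ ^ 2 • c - ⟪p.2, c⟫ • p.2 -
          (κ * ‖p.1‖⁻¹) • (ℝ ∙ p.1)ᗮ.starProjection c)).coprod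
        (innerSL ℝ ((2 * ⟪p.1, c⟫) • p.2 - ⟪p.2, c⟫ • p.1 - ⟪p.1, p.2⟫ • c))) p := by
  have h := (hasFDerivAt_lrlVector κ hp).differentiableAt
  refine (h.inner ℝ (differentiableAt_const c)).hasFDerivAt.congr_fderiv
    (ContinuousLinearMap.ext fun q => ?_)
  rw [fderiv_inner_apply ℝ h (differentiableAt_const c), fderiv_lrlVector_apply κ hp]
  simp only [fderiv_fun_const, Pi.zero_apply, zero_apply, inner_zero_right, zero_add,
    inner_add_left, inner_sub_left, inner_sub_right, real_inner_smul_left, real_inner_smul_right,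
    Submodule.inner_starProjection_left_eq_right, ContinuousLinearMap.coprod_apply,
    coe_innerSL_apply, real_inner_comm q.1, real_inner_comm q.2]
  ring

theorem inner_infinitesimalRotation_starProjection_orthogonal (a b x y : V) :
    ⟪x, infinitesimalRotation a b ((ℝ ∙ x)ᗮ.starProjection y)⟫ =
      ⟪x, infinitesimalRotation a b y⟫ := by
  simp only [infinitesimalRotation, starProjection_orthogonal_singleton, inner_sub_left,
    inner_sub_right, real_inner_smul_left, real_inner_smul_right]
  ring

theorem angularMomentum_eq_zero_of_inner_eq_zero {p : V × V} {α β : ℝ} {c d : V}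
    (h : α • p.1 + β • p.2 ≠ 0) (hc : ⟪α • p.1 + β • p.2, c⟫ = 0)
    (hd : ⟪α • p.1 + β • p.2, d⟫ = 0) : angularMomentum c d p = 0 := by
  simp only [inner_add_left, real_inner_smul_left] at hc hd
  have hα : α * angularMomentum c d p = 0 := by
    rw [angularMomentum]
    linear_combination ⟪p.2, d⟫ * hc - ⟪p.2, c⟫ * hd
  have hβ : β * angularMomentum c d p = 0 := by
    rw [angularMomentum]
    linear_combination ⟪p.1, c⟫ * hd - ⟪p.1, d⟫ * hc
  contrapose! h
  simp [(mul_eq_zero_iff_right h).1 hα, (mul_eq_zero_iff_right h).1 hβ]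

theorem lrlVector_eq_smul_add_smul (κ : ℝ) (p : V × V) :
    lrlVector κ p = (‖p.2‖ ^ 2 - κ * ‖p.1‖⁻¹) • p.1 + -⟪p.1, p.2⟫ • p.2 := by
  rw [lrlVector, NormedSpace.normalize]
  module

theorem angularMomentum_starProjection_orthogonal_lrlVector {κ : ℝ} {p : V × V}
    (hA : lrlVector κ p ≠ 0) (c d : V) :
    angularMomentum ((ℝ ∙ lrlVector κ p)ᗮ.starProjection c)
      ((ℝ ∙ lrlVector κ p)ᗮ.starProjection d) p = 0 := by
  have horth (x : V) : ⟪lrlVector κ p, (ℝ ∙ lrlVector κ p)ᗮ.starProjection x⟫ = 0 :=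
    Submodule.mem_orthogonal_singleton_iff_inner_right.1 (Submodule.starProjection_apply_mem _ x)
  have hcomb := lrlVector_eq_smul_add_smul κ p
  exact angularMomentum_eq_zero_of_inner_eq_zero (hcomb ▸ hA) (hcomb ▸ horth c) (hcomb ▸ horth d)

theorem fst_ne_zero_of_lrlVector_ne_zero {κ : ℝ} {p : V × V} (hA : lrlVector κ p ≠ 0) :
    p.1 ≠ 0 := by
  contrapose! hA
  simp [lrlVector, hA]

variable [CompleteSpace V]

/-- The Hamiltonian vector field of `F` on the phase space `V × V` of pairs (position, velocity),
up to sign: `(-∇ᵥF, ∇ᵣF)`. The sign is such that `{F, G}` is the derivative of `G` along it. -/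
def symplecticGradient (F : V × V → ℝ) (p : V × V) : V × V :=
  (-∇ (fun y => F (p.1, y)) p.2, ∇ (fun x => F (x, p.2)) p.1)

/-- The canonical Poisson bracket on `V × V`, for a Hilbert space `V` of any dimension. -/
def poissonBracket (F G : V × V → ℝ) (p : V × V) : ℝ :=
  ⟪∇ (fun x => F (x, p.2)) p.1, ∇ (fun y => G (p.1, y)) p.2⟫ -
    ⟪∇ (fun x => G (x, p.2)) p.1, ∇ (fun y => F (p.1, y)) p.2⟫

theorem neg_poissonBracket (F G : V × V → ℝ) (p : V × V) :
    -poissonBracket F G p = poissonBracket G F p := by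
  simp only [poissonBracket, neg_sub]

theorem poissonBracket_eq_fderiv {G : V × V → ℝ} {p : V × V} (hG : DifferentiableAt ℝ G p)
    (F : V × V → ℝ) : poissonBracket F G p = fderiv ℝ G p (symplecticGradient F p) := by
  rw [poissonBracket, real_inner_comm, inner_gradient_left, inner_gradient_left,
    fderiv_comp_prodMk_left hG, fderiv_comp_prodMk_right hG, ← map_sub]
  simp [symplecticGradient]

theorem symplecticGradient_eq {F : V × V → ℝ} {p : V × V} {a b : V}
    (hF : HasFDerivAt F ((innerSL ℝ a).coprod (innerSL ℝ b)) p) :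
    symplecticGradient F p = (-b, a) := by
  have hv : ∇ (fun y => F (p.1, y)) p.2 = b := ext_inner_right ℝ fun y => by
    simp [inner_gradient_left, fderiv_comp_prodMk_right hF.differentiableAt, hF.fderiv]
  have hr : ∇ (fun x => F (x, p.2)) p.1 = a := ext_inner_right ℝ fun x => by
    simp [inner_gradient_left, fderiv_comp_prodMk_left hF.differentiableAt, hF.fderiv]
  rw [symplecticGradient, hv, hr]

theorem poissonBracket_inner_const {A : V × V → V} {p : V × V} (hA : DifferentiableAt ℝ A p)
    (F : V × V → ℝ) (c : V) :
    poissonBracket F (fun q => ⟪A q, c⟫) p = ⟪fderiv ℝ A p (symplecticGradient F p), c⟫ := by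
  rw [poissonBracket_eq_fderiv (hA.inner ℝ (differentiableAt_const c)),
    fderiv_inner_apply ℝ hA (differentiableAt_const c)]
  simp

theorem poissonBracket_inner_normalize {A : V × V → V} {p : V × V} (hd : DifferentiableAt ℝ A p)
    (hA : A p ≠ 0) (F : V × V → ℝ) (c : V) :
    poissonBracket F (fun q => ⟪NormedSpace.normalize (A q), c⟫) p =
      ‖A p‖⁻¹ * poissonBracket F (fun q => ⟪A q, (ℝ ∙ A p)ᗮ.starProjection c⟫) p := by
  have hn := (hasFDerivAt_normalize hA).comp p hd.hasFDerivAt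
  have h := poissonBracket_inner_const hn.differentiableAt F c
  rw [hn.fderiv] at h
  rw [poissonBracket_inner_const hd]
  refine h.trans ?_
  rw [ContinuousLinearMap.comp_apply, smul_apply, real_inner_smul_left,
    Submodule.inner_starProjection_left_eq_right]

theorem symplecticGradient_angularMomentum (a b : V) (p : V × V) :
    symplecticGradient (angularMomentum a b) p =
      (-infinitesimalRotation a b p.1, -infinitesimalRotation a b p.2) := by
  rw [symplecticGradient_eq (hasFDerivAt_angularMomentum a b p)]
  simp [infinitesimalRotation]

theorem poissonBracket_keplerEnergy_angularMomentum (κ : ℝ) {p : V × V} (hp : p.1 ≠ 0) (a b : V) :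
    poissonBracket (keplerEnergy κ) (angularMomentum a b) p = 0 := by
  rw [poissonBracket_eq_fderiv (hasFDerivAt_angularMomentum a b p).differentiableAt,
    symplecticGradient_eq (hasFDerivAt_keplerEnergy κ hp), fderiv_angularMomentum_apply]
  simp only [angularMomentum, inner_neg_left, real_inner_smul_left]
  ring

theorem poissonBracket_keplerEnergy_inner_lrlVector (κ : ℝ) {p : V × V} (hp : p.1 ≠ 0) (c : V) :
    poissonBracket (keplerEnergy κ) (fun q => ⟪lrlVector κ q, c⟫) p = 0 := by
  suffices fderiv ℝ (lrlVector κ) p (symplecticGradient (keplerEnergy κ) p) = 0 by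
    rw [poissonBracket_inner_const (hasFDerivAt_lrlVector κ hp).differentiableAt, this,
      inner_zero_left]
  have hr : ‖p.1‖ ≠ 0 := norm_ne_zero_iff.2 hp
  simp only [symplecticGradient_eq (hasFDerivAt_keplerEnergy κ hp), fderiv_lrlVector_apply κ hp,
    starProjection_orthogonal_singleton, inner_neg_right, real_inner_smul_right,
    real_inner_self_eq_norm_sq, real_inner_comm p.1]
  match_scalars <;> field_simp <;> ring

theorem poissonBracket_angularMomentum_angularMomentum (a b c d : V) (p : V × V) :
    poissonBracket (angularMomentum a b) (angularMomentum c d) p =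
      angularMomentum (infinitesimalRotation a b c) d p +
        angularMomentum c (infinitesimalRotation a b d) p := by
  rw [poissonBracket_eq_fderiv (hasFDerivAt_angularMomentum c d p).differentiableAt,
    symplecticGradient_angularMomentum, fderiv_angularMomentum_apply]
  simp only [angularMomentum, inner_neg_left, inner_infinitesimalRotation_left]
  ring

theorem poissonBracket_angularMomentum_inner_lrlVector (κ : ℝ) (a b : V) {p : V × V}
    (hp : p.1 ≠ 0) (c : V) :
    poissonBracket (angularMomentum a b) (fun q => ⟪lrlVector κ q, c⟫) p =
      ⟪lrlVector κ p, infinitesimalRotation a b c⟫ := by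
  rw [poissonBracket_inner_const (hasFDerivAt_lrlVector κ hp).differentiableAt,
    symplecticGradient_angularMomentum, fderiv_lrlVector_apply κ hp]
  simp only [lrlVector, NormedSpace.normalize, infinitesimalRotation,
    starProjection_orthogonal_singleton, inner_add_left, inner_sub_left, inner_sub_right,
    inner_neg_left, inner_neg_right, real_inner_smul_left, real_inner_smul_right,
    real_inner_comm c a, real_inner_comm c b]
  ring

theorem poissonBracket_inner_lrlVector_inner_lrlVector (κ : ℝ) {p : V × V} (hp : p.1 ≠ 0)
    (c d : V) :
    poissonBracket (fun q => ⟪lrlVector κ q, c⟫) (fun q => ⟪lrlVector κ q, d⟫) p =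
      -2 * keplerEnergy κ p * angularMomentum c d p := by
  rw [poissonBracket_inner_const (hasFDerivAt_lrlVector κ hp).differentiableAt,
    symplecticGradient_eq (hasFDerivAt_inner_lrlVector κ hp c), fderiv_lrlVector_apply κ hp]
  have hr : ‖p.1‖ ≠ 0 := norm_ne_zero_iff.2 hp
  simp only [keplerEnergy, angularMomentum, starProjection_orthogonal_singleton, inner_add_left,
    inner_sub_left, inner_sub_right, inner_neg_left, inner_neg_right, real_inner_smul_left,
    real_inner_smul_right, real_inner_self_eq_norm_sq, real_inner_comm p.1 p.2]
  field_simp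
  ring

theorem poissonBracket_inner_lrlDirection {κ : ℝ} {p : V × V} (hA : lrlVector κ p ≠ 0)
    (F : V × V → ℝ) (c : V) :
    poissonBracket F (fun q => ⟪lrlDirection κ q, c⟫) p =
      ‖lrlVector κ p‖⁻¹ *
        poissonBracket F (fun q => ⟪lrlVector κ q, (ℝ ∙ lrlVector κ p)ᗮ.starProjection c⟫) p :=
  poissonBracket_inner_normalize
    (hasFDerivAt_lrlVector κ (fst_ne_zero_of_lrlVector_ne_zero hA)).differentiableAt hA F c

theorem poissonBracket_keplerEnergy_inner_lrlDirection {κ : ℝ} {p : V × V}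
    (hA : lrlVector κ p ≠ 0) (c : V) :
    poissonBracket (keplerEnergy κ) (fun q => ⟪lrlDirection κ q, c⟫) p = 0 := by
  rw [poissonBracket_inner_lrlDirection hA, poissonBracket_keplerEnergy_inner_lrlVector κ
    (fst_ne_zero_of_lrlVector_ne_zero hA), mul_zero]

theorem poissonBracket_angularMomentum_inner_lrlDirection {κ : ℝ} {p : V × V}
    (hA : lrlVector κ p ≠ 0) (a b c : V) :
    poissonBracket (angularMomentum a b) (fun q => ⟪lrlDirection κ q, c⟫) p =
      ⟪lrlDirection κ p, infinitesimalRotation a b c⟫ := by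
  rw [poissonBracket_inner_lrlDirection hA, poissonBracket_angularMomentum_inner_lrlVector κ a b
    (fst_ne_zero_of_lrlVector_ne_zero hA), inner_infinitesimalRotation_starProjection_orthogonal,
    lrlDirection, NormedSpace.normalize, real_inner_smul_left]

theorem poissonBracket_inner_lrlDirection_inner_lrlDirection {κ : ℝ} {p : V × V}
    (hA : lrlVector κ p ≠ 0) (c d : V) :
    poissonBracket (fun q => ⟪lrlDirection κ q, c⟫) (fun q => ⟪lrlDirection κ q, d⟫) p = 0 := by
  rw [poissonBracket_inner_lrlDirection hA, ← neg_poissonBracket,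
    poissonBracket_inner_lrlDirection hA, poissonBracket_inner_lrlVector_inner_lrlVector κ
      (fst_ne_zero_of_lrlVector_ne_zero hA), angularMomentum_starProjection_orthogonal_lrlVector hA]
  simp

theorem poisson_algebra_E_L_Theta_general (κ : ℝ) {p : V × V} (hA : lrlVector κ p ≠ 0) :
    (∀ a b, poissonBracket (keplerEnergy κ) (angularMomentum a b) p = 0) ∧
    (∀ c, poissonBracket (keplerEnergy κ) (fun q => ⟪lrlDirection κ q, c⟫) p = 0) ∧
    (∀ a b c d, poissonBracket (angularMomentum a b) (angularMomentum c d) p =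
      angularMomentum (infinitesimalRotation a b c) d p +
        angularMomentum c (infinitesimalRotation a b d) p) ∧
    (∀ a b c, poissonBracket (angularMomentum a b) (fun q => ⟪lrlDirection κ q, c⟫) p =
      ⟪lrlDirection κ p, infinitesimalRotation a b c⟫) ∧
    (∀ c d, poissonBracket (fun q => ⟪lrlDirection κ q, c⟫) (fun q => ⟪lrlDirection κ q, d⟫) p =
      0) :=
  ⟨poissonBracket_keplerEnergy_angularMomentum κ (fst_ne_zero_of_lrlVector_ne_zero hA),
    poissonBracket_keplerEnergy_inner_lrlDirection hA,
    fun a b c d => poissonBracket_angularMomentum_angularMomentum a b c d p,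
    poissonBracket_angularMomentum_inner_lrlDirection hA,
    poissonBracket_inner_lrlDirection_inner_lrlDirection hA⟩

end HilbertSpace

section Space

open scoped RealInnerProductSpace

/-- The standard basis of `E3`. -/
def stdVec (i : Fin 3) : E3 := EuclideanSpace.single i 1

theorem inner_stdVec (x : E3) (i : Fin 3) : ⟪x, stdVec i⟫ = x i := by
  simp [stdVec, EuclideanSpace.inner_single_right]

theorem dot_eq_inner (a b : E3) : dot a b = ⟪a, b⟫ := by
  simp [dot, PiLp.inner_apply, mul_comm]

theorem pb_eq_poissonBracket (F G : E3 × E3 → ℝ) : pb F G = poissonBracket F G := by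
  ext p
  simp only [pb, dot_eq_inner, gradR, gradV, poissonBracket]

theorem energy_eq_keplerEnergy (κ : ℝ) : energy κ = keplerEnergy κ := rfl

theorem angMom_apply (p : E3 × E3) (i : Fin 3) :
    angMom p i = angularMomentum (stdVec (i + 1)) (stdVec (i + 2)) p := by
  simp only [angularMomentum, inner_stdVec]
  fin_cases i <;> rfl

theorem lrl_eq_lrlVector (κ : ℝ) : lrl κ = lrlVector κ := by
  ext p i
  rw [lrlVector, ← real_inner_self_eq_norm_sq, ← dot_eq_inner, ← dot_eq_inner]
  simp only [lrl, angMom, cross, toE3, NormedSpace.normalize, dot, Fin.sum_univ_three,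
    PiLp.continuousLinearEquiv_symm_apply, PiLp.sub_apply, PiLp.smul_apply, smul_eq_mul]
  fin_cases i <;> simp only [Fin.isValue, Fin.zero_eta, Fin.mk_one, Fin.reduceFinMk,
    Matrix.cons_val] <;> ring

theorem lrlDir_apply (κ : ℝ) (p : E3 × E3) (i : Fin 3) :
    lrlDir κ p i = ⟪lrlDirection κ p, stdVec i⟫ := by
  rw [lrlDir, lrl_eq_lrlVector, inner_stdVec, lrlDirection, NormedSpace.normalize]

theorem infinitesimalRotation_stdVec (i j : Fin 3) :
    infinitesimalRotation (stdVec (i + 1)) (stdVec (i + 2)) (stdVec j) =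
      ∑ k, eps i j k • stdVec k := by
  ext l
  simp only [infinitesimalRotation, inner_stdVec, Fin.sum_univ_three]
  fin_cases i <;> fin_cases j <;> fin_cases l <;> simp [stdVec, eps] <;> norm_num

theorem angularMomentum_infinitesimalRotation_stdVec (i j : Fin 3) (p : E3 × E3) :
    angularMomentum (infinitesimalRotation (stdVec (i + 1)) (stdVec (i + 2)) (stdVec (j + 1)))
        (stdVec (j + 2)) p +
      angularMomentum (stdVec (j + 1))
        (infinitesimalRotation (stdVec (i + 1)) (stdVec (i + 2)) (stdVec (j + 2))) p =
      ∑ k, eps i j k * angularMomentum (stdVec (k + 1)) (stdVec (k + 2)) p := by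
  simp only [infinitesimalRotation_stdVec, angularMomentum, Fin.sum_univ_three, inner_add_right,
    real_inner_smul_right, inner_stdVec]
  fin_cases i <;> fin_cases j <;> simp [eps] <;> ring

theorem inner_infinitesimalRotation_stdVec (i j : Fin 3) (x : E3) :
    ⟪x, infinitesimalRotation (stdVec (i + 1)) (stdVec (i + 2)) (stdVec j)⟫ =
      ∑ k, eps i j k * ⟪x, stdVec k⟫ := by
  simp only [infinitesimalRotation_stdVec, inner_sum, real_inner_smul_right]

end Space

/-- The seven functions `E, L_1, L_2, L_3, Θ_1, Θ_2, Θ_3` are closed under the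
Poisson bracket, with the only nonvanishing brackets being
`{L_i,L_j} = Σ_k ε_{ijk} L_k` and `{L_i,Θ_j} = Σ_k ε_{ijk} Θ_k`; in particular
`{E,L_i} = 0`, `{E,Θ_i} = 0` and `{Θ_i,Θ_j} = 0`.  This is the bracket structure
of `ℝ ⊕ (so(3) ⋉ ℝ³)`. -/
theorem poisson_algebra_E_L_Theta (κ : ℝ) (hκ : 0 < κ)
    (r v : E3) (hr : r ≠ 0) (hA : lrl κ (r, v) ≠ 0) :
    (∀ i : Fin 3, pb (energy κ) (fun p => angMom p i) (r, v) = 0) ∧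
    (∀ i : Fin 3, pb (energy κ) (fun p => lrlDir κ p i) (r, v) = 0) ∧
    (∀ i j : Fin 3,
      pb (fun p => angMom p i) (fun p => angMom p j) (r, v)
        = ∑ k, eps i j k * angMom (r, v) k) ∧
    (∀ i j : Fin 3,
      pb (fun p => angMom p i) (fun p => lrlDir κ p j) (r, v)
        = ∑ k, eps i j k * lrlDir κ (r, v) k) ∧
    (∀ i j : Fin 3,
      pb (fun p => lrlDir κ p i) (fun p => lrlDir κ p j) (r, v) = 0) := by
  obtain ⟨hEL, hEΘ, hLL, hLΘ, hΘΘ⟩ :=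
    poisson_algebra_E_L_Theta_general κ (p := (r, v)) (by rwa [← lrl_eq_lrlVector])
  simp only [pb_eq_poissonBracket, energy_eq_keplerEnergy, angMom_apply, lrlDir_apply,
    ← angularMomentum_infinitesimalRotation_stdVec, ← inner_infinitesimalRotation_stdVec]
  exact ⟨fun _ => hEL _ _, fun _ => hEΘ _, fun _ _ => hLL _ _ _ _, fun _ _ => hLΘ _ _ _,
    fun _ _ => hΘΘ _ _⟩
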